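/- arXiv:math/0406062 — 3 statements merged into one kernel-verified Lean document; each statement's English description precedes it below -/
import Mathlib

section
/- Let R be a ring with a central invertible element q. Let X and Y be n×n q-generic matrices over R such that every entry of X commutes with every entry of Y. Then the quantum determinant is multiplicative on the product: det_q(X·Y) = (det_q X)·(det_q Y). -/
/-!
Expanding `det_q (X * Y)` multilinearly and moving the entries of `X` to the left gives
`∑_f x_{1,f 1} ⋯ x_{n,f n} · det_q Y_f`, over all maps `f`, where the `i`-th row of `Y_f` is row
`f i` of `Y`. Sort `f` by adjacent transpositions. Pairing `σ` with `σ ∘ (i i+1)` in a quantum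
determinant groups it into `2 × 2` quantum minors of the rows `i` and `i + 1`. For these the quantum
relations of `Y` say that they vanish if the two rows are the same row of `Y`, and that putting two
rows of `Y` in decreasing instead of increasing order costs a factor `-q⁻¹`. Hence `det_q Y_f` is
zero unless `f` is a permutation, and is then `(-q)^{-ℓ(f)} det_q Y`, so that the sum is the
expansion of `det_q X` times `det_q Y`.
-/

/-- The number of inversions (the "length" `ℓ`) of a tuple. -/
def tupleInv {m : ℕ} {α : Type*} [LinearOrder α] (f : Fin m → α) : ℕ :=
  ((Finset.univ : Finset (Fin m × Fin m)).filter fun p => p.1 < p.2 ∧ f p.2 < f p.1).card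

/-- The quantum determinant `det_q A = ∑_σ (-q)^{-ℓ(σ)} a_{1,σ1} ⋯ a_{n,σn}`. -/
def qdet {R : Type*} [Ring R] {n : ℕ} (q : Rˣ) (A : Matrix (Fin n) (Fin n) R) : R :=
  ∑ σ : Equiv.Perm (Fin n),
    (((-q) ^ (-(tupleInv fun i => σ i : ℤ)) : Rˣ) : R) * (List.ofFn fun i => A i (σ i)).prod

/-- A matrix is `q`-generic if its entries satisfy the standard quantum relations. -/
def qGeneric {R : Type*} [Ring R] {n m : ℕ} (q : Rˣ) (X : Matrix (Fin n) (Fin m) R) : Prop :=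
  (∀ (k : Fin n) (i j : Fin m), i < j → X k j * X k i = (q : R) * (X k i * X k j)) ∧
  (∀ (i j : Fin n) (k : Fin m), i < j → X j k * X i k = (q : R) * (X i k * X j k)) ∧
  (∀ (i j : Fin n) (k l : Fin m), i < j → k < l → X j k * X i l = X i l * X j k) ∧
  (∀ (i j : Fin n) (k l : Fin m), i < j → k < l →
    X j l * X i k = X i k * X j l + ((q : R) - ((q⁻¹ : Rˣ) : R)) * (X i l * X j k))

/-- A `q`-Manin matrix, in the row convention: the usual column convention is obtained by
transposing. These are the relations that make `qdet`, whose factors are ordered by rows,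
`q`-alternating in the rows. -/
structure IsQManin {R α β : Type*} [Ring R] [LT α] [LT β] (q : Rˣ) (Y : Matrix α β R) :
    Prop where
  row_rel : ∀ (i : α) {k l : β}, k < l → Y i l * Y i k = q * (Y i k * Y i l)
  cross_rel : ∀ {i j : α} {k l : β}, i < j → k < l →
    Y i k * Y j l - Y j l * Y i k = ↑q⁻¹ * (Y i l * Y j k) - q * (Y j k * Y i l)

lemma qGeneric.isQManin {R : Type*} [Ring R] {n m : ℕ} {q : Rˣ} {Y : Matrix (Fin n) (Fin m) R}
    (hY : qGeneric q Y) : IsQManin q Y where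
  row_rel i _ _ hkl := hY.1 i _ _ hkl
  cross_rel hij hkl := by
    rw [hY.2.2.2 _ _ _ _ hij hkl, hY.2.2.1 _ _ _ _ hij hkl, sub_mul]
    abel

/-- The `2 × 2` quantum minor of the rows `i`, `j` and the columns `k`, `l`. The rows may coincide
or be in decreasing order. -/
def qMinor {R α β : Type*} [Ring R] (q : Rˣ) (A : Matrix α β R) (i j : α) (k l : β) : R :=
  A i k * A j l - ↑q⁻¹ * (A i l * A j k)

namespace IsQManin

variable {R α β : Type*} [Ring R] [LT α] [LT β] {q : Rˣ} {Y : Matrix α β R}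

lemma qMinor_self (hY : IsQManin q Y) (i : α) {k l : β} (hkl : k < l) :
    qMinor q Y i i k l = 0 := by
  rw [qMinor, hY.row_rel i hkl, Units.inv_mul_cancel_left, sub_self]

lemma qMinor_swap (hY : IsQManin q Y) {i j : α} {k l : β} (hij : i < j) (hkl : k < l) :
    qMinor q Y j i k l = -↑q⁻¹ * qMinor q Y i j k l := by
  have hcross : (↑q⁻¹ : R) * (Y i k * Y j l - Y j l * Y i k) =
      ↑q⁻¹ * (↑q⁻¹ * (Y i l * Y j k)) - Y j k * Y i l := by
    rw [hY.cross_rel hij hkl, mul_sub, Units.inv_mul_cancel_left]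
  rw [mul_sub, sub_eq_sub_iff_add_eq_add] at hcross
  rw [qMinor, qMinor, neg_mul, mul_sub, neg_sub, sub_eq_sub_iff_add_eq_add, add_comm, hcross,
    add_comm]

end IsQManin

section AdjacentTranspositions

lemma swap_lt_swap_of_covBy {α : Type*} [LinearOrder α] {i j a b : α} (hij : i ⋖ j)
    (hab : a < b) (hne : ¬(a = i ∧ b = j)) : Equiv.swap i j a < Equiv.swap i j b := by
  have hlt := hij.lt
  have hgap := fun c => hij.2 (c := c)
  simp only [Equiv.swap_apply_def]
  grind

lemma tupleInv_comp_swap {α : Type*} [LinearOrder α] {n : ℕ} {i j : Fin n} (hij : i ⋖ j)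
    {f : Fin n → α} (hf : f i < f j) : tupleInv (f ∘ Equiv.swap i j) = tupleInv f + 1 := by
  let inv (g : Fin n → α) : Finset (Fin n × Fin n) := {p | p.1 < p.2 ∧ g p.2 < g p.1}
  let e := (Equiv.prodCongr (Equiv.swap i j) (Equiv.swap i j)).toEmbedding
  have hinv : inv (f ∘ Equiv.swap i j) = insert (i, j) ((inv f).map e) := by
    ext ⟨a, b⟩
    simp only [inv, e, Finset.mem_insert, Finset.mem_map_equiv, Finset.mem_filter_univ,
      Prod.mk.injEq, Equiv.prodCongr_symm, Equiv.symm_swap, Equiv.prodCongr_apply, Prod.map_apply,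
      Function.comp_apply]
    constructor
    · rintro ⟨hab, hf_ab⟩
      exact or_iff_not_imp_left.2 fun hne => ⟨swap_lt_swap_of_covBy hij hab hne, hf_ab⟩
    · rintro (⟨rfl, rfl⟩ | ⟨hab, hf_ab⟩)
      · simpa using ⟨hij.lt, hf⟩
      · refine ⟨?_, hf_ab⟩
        simpa using swap_lt_swap_of_covBy hij hab fun hab_eq => by
          rw [hab_eq.1, hab_eq.2] at hf_ab
          exact hf.asymm hf_ab
  have hnot_mem : (i, j) ∉ (inv f).map e := by
    simp [inv, e, Finset.mem_map_equiv, hij.lt.le]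
  calc (inv (f ∘ Equiv.swap i j)).card = ((inv f).map e).card + 1 := by
        rw [hinv, Finset.card_insert_of_notMem hnot_mem]
    _ = tupleInv f + 1 := by rw [Finset.card_map, tupleInv]

lemma tupleInv_eq_zero_of_monotone {α : Type*} [LinearOrder α] {n : ℕ} {f : Fin n → α}
    (hf : Monotone f) : tupleInv f = 0 := by
  rw [tupleInv, Finset.card_eq_zero, Finset.filter_eq_empty_iff]
  exact fun p _ hp => (hf hp.1.le).not_gt hp.2

lemma tuple_sort_induction {α : Type*} [LinearOrder α] {n : ℕ} {motive : (Fin n → α) → Prop}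
    (monotone : ∀ f, Monotone f → motive f)
    (swap : ∀ f (i j : Fin n), i ⋖ j → f i < f j → motive f → motive (f ∘ Equiv.swap i j))
    (f : Fin n → α) : motive f := by
  induction hk : tupleInv f using Nat.strong_induction_on generalizing f with
  | _ k ih =>
    by_cases hf : Monotone f
    · exact monotone f hf
    obtain ⟨i, j, hij, hlt⟩ : ∃ i j, i ⋖ j ∧ f j < f i := by
      simpa [monotone_iff_forall_covBy] using hf
    have hinv : (f ∘ Equiv.swap i j) ∘ Equiv.swap i j = f := by ext; simp
    have hlt' : (f ∘ Equiv.swap i j) i < (f ∘ Equiv.swap i j) j := by simpa using hlt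
    have hcard := tupleInv_comp_swap hij hlt'
    rw [hinv] at hcard
    simpa only [hinv] using swap _ i j hij hlt' (ih _ (by omega) _ rfl)

lemma exists_covBy_apply_eq_of_monotone {α β : Type*} [LinearOrder α] [LocallyFiniteOrder α]
    [PartialOrder β] {f : α → β} (hf : Monotone f) (hinj : ¬Function.Injective f) :
    ∃ i j, i ⋖ j ∧ f i = f j := by
  by_contra! hne
  exact hinj (StrictMono.injective <| (strictMono_iff_forall_covBy f).2 fun i j hij =>
    (hf hij.le).lt_of_ne (hne i j hij))

lemma sum_perm_eq_sum_add_mul_swap {α M : Type*} [Fintype α] [LinearOrder α] [AddCommMonoid M]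
    {i j : α} (hij : i ≠ j) (F : Equiv.Perm α → M) :
    ∑ σ, F σ = ∑ σ : Equiv.Perm α with σ i < σ j, (F σ + F (σ * Equiv.swap i j)) := by
  rw [Finset.sum_add_distrib, ← Finset.sum_filter_add_sum_filter_not _ fun σ => σ i < σ j]
  congr 1
  refine Finset.sum_equiv (Equiv.mulRight (Equiv.swap i j)) (fun σ => ?_) fun σ _ => ?_
  · simp [(σ.injective.ne hij.symm).le_iff_lt]
  · simp [mul_assoc]

lemma sum_fun_eq_sum_perm {α M : Type*} [Fintype α] [DecidableEq α] [AddCommMonoid M]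
    (F : (α → α) → M) (hF : ∀ f, ¬Function.Injective f → F f = 0) :
    ∑ f, F f = ∑ σ : Equiv.Perm α, F σ := by
  refine (Fintype.sum_of_injective _ DFunLike.coe_injective _ _ (fun f hf => hF f ?_)
    fun _ => rfl).symm
  exact fun hinj => hf ⟨Equiv.ofBijective f hinj.bijective_of_finite, rfl⟩

end AdjacentTranspositions

section OrderedProducts

lemma exists_finRange_eq_append_cons_cons {n : ℕ} {i j : Fin n} (hij : i ⋖ j) :
    ∃ l₁ l₂, List.finRange n = l₁ ++ i :: j :: l₂ := by
  have hj : (i : ℕ) + 1 = j := Nat.covBy_iff_add_one_eq.1 (Fin.covBy_iff.1 hij)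
  refine ⟨(List.finRange n).take i, (List.finRange n).drop (j + 1), ?_⟩
  conv_lhs => rw [← List.take_append_drop i (List.finRange n)]
  rw [List.drop_eq_getElem_cons (by simp), List.drop_eq_getElem_cons (by simp [hj])]
  simp [hj]

lemma exists_prod_ofFn_eq_mul_mul {M : Type*} [Monoid M] {n : ℕ} {i j : Fin n} (hij : i ⋖ j)
    (g₀ : Fin n → M) : ∃ P S : M, ∀ g : Fin n → M, Set.EqOn g g₀ {i, j}ᶜ →
      (List.ofFn g).prod = P * (g i * g j) * S := by
  obtain ⟨l₁, l₂, hl⟩ := exists_finRange_eq_append_cons_cons hij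
  have hnodup := List.nodup_finRange n
  rw [hl] at hnodup
  have hl₁ : ∀ k ∈ l₁, k ∈ ({i, j}ᶜ : Set (Fin n)) := by
    grind
  have hl₂ : ∀ k ∈ l₂, k ∈ ({i, j}ᶜ : Set (Fin n)) := by
    grind
  refine ⟨(l₁.map g₀).prod, (l₂.map g₀).prod, fun g hg => ?_⟩
  rw [List.ofFn_eq_map, hl, List.map_append, List.map_cons, List.map_cons,
    List.map_congr_left fun k hk => hg (hl₁ k hk), List.map_congr_left fun k hk => hg (hl₂ k hk)]
  simp only [List.prod_append, List.prod_cons, mul_assoc]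

lemma prod_ofFn_mul {M : Type*} [Monoid M] {n : ℕ} (a b : Fin n → M)
    (hab : ∀ i j, Commute (a i) (b j)) :
    (List.ofFn fun i => a i * b i).prod = (List.ofFn a).prod * (List.ofFn b).prod := by
  induction n with
  | zero => simp
  | succ n ih =>
    have hcomm : Commute (b 0) (List.ofFn fun i : Fin n => a i.succ).prod :=
      Commute.list_prod_right _ _ <| List.forall_mem_ofFn_iff.2 fun i => (hab _ _).symm
    simp only [List.ofFn_succ, List.prod_cons, ih _ _ fun i j => hab i.succ j.succ]
    exact hcomm.mul_mul_mul_comm _ _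

lemma prod_ofFn_sum {R ι : Type*} [Semiring R] [Fintype ι] {n : ℕ} (F : Fin n → ι → R) :
    (List.ofFn fun i => ∑ k, F i k).prod =
      ∑ f : Fin n → ι, (List.ofFn fun i => F i (f i)).prod := by
  classical
  simpa only [MultilinearMap.mkPiAlgebraFin_apply] using
    (MultilinearMap.mkPiAlgebraFin ℕ n R).map_sum F

end OrderedProducts

section QuantumDeterminant

variable {R : Type*} [Ring R] {n : ℕ} {q : Rˣ}

/-- The summand of `qdet q A` at `σ`, with the coefficient `(-q)^{-ℓ(σ)}` written as a power of
`-q⁻¹` with natural exponent. -/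
def qdetTerm (q : Rˣ) (A : Matrix (Fin n) (Fin n) R) (σ : Equiv.Perm (Fin n)) : R :=
  (-↑q⁻¹) ^ tupleInv σ * (List.ofFn fun i => A i (σ i)).prod

lemma qdet_eq_sum_qdetTerm (q : Rˣ) (A : Matrix (Fin n) (Fin n) R) :
    qdet q A = ∑ σ, qdetTerm q A σ := by
  simp [qdet, qdetTerm, zpow_neg, ← inv_pow]

lemma commute_neg_inv (hq : ∀ r : R, Commute (q : R) r) (r : R) : Commute (-↑q⁻¹ : R) r :=
  (hq r).units_inv_left.neg_left

lemma exists_qdetTerm_add_mul_swap (hq : ∀ r : R, Commute (q : R) r) {i j : Fin n} (hij : i ⋖ j)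
    (A₀ : Matrix (Fin n) (Fin n) R) {σ : Equiv.Perm (Fin n)} (hσ : σ i < σ j) :
    ∃ P S : R, ∀ A : Matrix (Fin n) (Fin n) R, Set.EqOn A A₀ {i, j}ᶜ →
      qdetTerm q A σ + qdetTerm q A (σ * Equiv.swap i j) =
        P * qMinor q A i j (σ i) (σ j) * S := by
  obtain ⟨P, S, hPS⟩ := exists_prod_ofFn_eq_mul_mul hij fun k => A₀ k (σ k)
  refine ⟨(-↑q⁻¹) ^ tupleInv σ * P, S, fun A hA => ?_⟩
  have hlen : tupleInv (σ * Equiv.swap i j) = tupleInv σ + 1 := tupleInv_comp_swap hij hσ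
  have hprod : (List.ofFn fun k => A k (σ k)).prod = P * (A i (σ i) * A j (σ j)) * S :=
    hPS _ fun k hk => by simp only [hA hk]
  have hprod_swap : (List.ofFn fun k => A k ((σ * Equiv.swap i j) k)).prod =
      P * (A i (σ j) * A j (σ i)) * S := by
    have hEqOn : Set.EqOn (fun k => A k ((σ * Equiv.swap i j) k)) (fun k => A₀ k (σ k))
        {i, j}ᶜ := fun k hk => by
      have hk' : k ≠ i ∧ k ≠ j := by simpa using hk
      simp only [hA hk, Equiv.Perm.mul_apply, Equiv.swap_apply_of_ne_of_ne hk'.1 hk'.2]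
    simpa using hPS _ hEqOn
  have hP : -↑q⁻¹ * P = P * -↑q⁻¹ := commute_neg_inv hq P
  rw [qdetTerm, qdetTerm, hprod, hprod_swap, hlen, qMinor, pow_succ]
  calc (-↑q⁻¹) ^ tupleInv σ * (P * (A i (σ i) * A j (σ j)) * S) +
        (-↑q⁻¹) ^ tupleInv σ * -↑q⁻¹ * (P * (A i (σ j) * A j (σ i)) * S)
      = (-↑q⁻¹) ^ tupleInv σ * (P * (A i (σ i) * A j (σ j)) +
          -↑q⁻¹ * P * (A i (σ j) * A j (σ i))) * S := by
        noncomm_ring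
    _ = (-↑q⁻¹) ^ tupleInv σ * P *
          (A i (σ i) * A j (σ j) - ↑q⁻¹ * (A i (σ j) * A j (σ i))) * S := by
        rw [hP]
        noncomm_ring

lemma qdet_eq_mul_of_qMinor_eq_mul (hq : ∀ r : R, Commute (q : R) r) {i j : Fin n} (hij : i ⋖ j)
    {A B : Matrix (Fin n) (Fin n) R} (hAB : Set.EqOn A B {i, j}ᶜ) {c : R}
    (hc : ∀ r, Commute c r)
    (hminor : ∀ k l, k < l → qMinor q A i j k l = c * qMinor q B i j k l) :
    qdet q A = c * qdet q B := by
  rw [qdet_eq_sum_qdetTerm, qdet_eq_sum_qdetTerm, sum_perm_eq_sum_add_mul_swap hij.ne,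
    sum_perm_eq_sum_add_mul_swap hij.ne, Finset.mul_sum]
  refine Finset.sum_congr rfl fun σ hσ => ?_
  have hlt : σ i < σ j := by simpa using hσ
  obtain ⟨P, S, hPS⟩ := exists_qdetTerm_add_mul_swap hq hij B hlt
  rw [hPS A hAB, hPS B (Set.eqOn_refl _ _), hminor _ _ hlt, ← mul_assoc, ← mul_assoc, ← mul_assoc,
    (hc P).eq]

lemma qdet_mul_eq_sum {ι : Type*} [Fintype ι] (hq : ∀ r : R, Commute (q : R) r)
    (X : Matrix (Fin n) ι R) (Y : Matrix ι (Fin n) R)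
    (hXY : ∀ i k l j, Commute (X i k) (Y l j)) :
    qdet q (X * Y) =
      ∑ f : Fin n → ι, (List.ofFn fun i => X i (f i)).prod * qdet q (Y.submatrix f id) := by
  simp only [qdet_eq_sum_qdetTerm, Finset.mul_sum]
  rw [Finset.sum_comm]
  refine Finset.sum_congr rfl fun σ _ => ?_
  simp only [qdetTerm, Matrix.mul_apply, prod_ofFn_sum, Finset.mul_sum]
  refine Finset.sum_congr rfl fun f _ => ?_
  rw [prod_ofFn_mul _ _ fun i j => hXY _ _ _ _]
  exact ((commute_neg_inv hq _).pow_left _).left_comm _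

namespace IsQManin

variable {α : Type*} [LinearOrder α] {Y : Matrix α (Fin n) R}

lemma qdet_submatrix_eq_zero_of_covBy (hY : IsQManin q Y) (hq : ∀ r : R, Commute (q : R) r)
    {i j : Fin n} (hij : i ⋖ j) {f : Fin n → α} (hf : f i = f j) :
    qdet q (Y.submatrix f id) = 0 := by
  rw [← zero_mul (qdet q (Y.submatrix f id))]
  refine qdet_eq_mul_of_qMinor_eq_mul hq hij (Set.eqOn_refl _ _) Commute.zero_left
    fun k l hkl => ?_
  calc qMinor q (Y.submatrix f id) i j k l = qMinor q Y (f i) (f i) k l := by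
        simp only [qMinor, Matrix.submatrix_apply, id, hf]
    _ = 0 * qMinor q (Y.submatrix f id) i j k l := by rw [hY.qMinor_self _ hkl, zero_mul]

lemma qdet_submatrix_comp_swap (hY : IsQManin q Y) (hq : ∀ r : R, Commute (q : R) r)
    {i j : Fin n} (hij : i ⋖ j) {f : Fin n → α} (hf : f i < f j) :
    qdet q (Y.submatrix (f ∘ Equiv.swap i j) id) = -↑q⁻¹ * qdet q (Y.submatrix f id) := by
  refine qdet_eq_mul_of_qMinor_eq_mul hq hij (fun k hk => ?_) (commute_neg_inv hq)
    fun k l hkl => ?_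
  · have hk' : k ≠ i ∧ k ≠ j := by simpa using hk
    ext
    simp [Equiv.swap_apply_of_ne_of_ne hk'.1 hk'.2]
  · simpa [qMinor] using hY.qMinor_swap hf hkl

lemma qdet_submatrix_eq_pow_mul_sort (hY : IsQManin q Y) (hq : ∀ r : R, Commute (q : R) r)
    (f : Fin n → α) :
    qdet q (Y.submatrix f id) =
      (-↑q⁻¹) ^ tupleInv f * qdet q (Y.submatrix (f ∘ Tuple.sort f) id) := by
  induction f using tuple_sort_induction with
  | monotone f hf =>
    rw [tupleInv_eq_zero_of_monotone hf, pow_zero, one_mul, Tuple.sort_eq_refl_iff_monotone.2 hf,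
      Equiv.coe_refl, Function.comp_id]
  | swap f i j hij hlt ih =>
    rw [hY.qdet_submatrix_comp_swap hq hij hlt, ih, tupleInv_comp_swap hij hlt,
      Tuple.comp_perm_comp_sort_eq_comp_sort, pow_succ', mul_assoc]

lemma qdet_submatrix_of_not_injective (hY : IsQManin q Y) (hq : ∀ r : R, Commute (q : R) r)
    {f : Fin n → α} (hf : ¬Function.Injective f) : qdet q (Y.submatrix f id) = 0 := by
  have hsort : ¬Function.Injective (f ∘ Tuple.sort f) := by
    rwa [Equiv.injective_comp]
  obtain ⟨i, j, hij, heq⟩ := exists_covBy_apply_eq_of_monotone (Tuple.monotone_sort f) hsort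
  rw [hY.qdet_submatrix_eq_pow_mul_sort hq, hY.qdet_submatrix_eq_zero_of_covBy hq hij heq,
    mul_zero]

lemma qdet_submatrix_perm {Y : Matrix (Fin n) (Fin n) R} (hY : IsQManin q Y)
    (hq : ∀ r : R, Commute (q : R) r) (σ : Equiv.Perm (Fin n)) :
    qdet q (Y.submatrix σ id) = (-↑q⁻¹) ^ tupleInv σ * qdet q Y := by
  have hsort : ⇑σ ∘ Tuple.sort σ = id := by
    ext
    simp [Tuple.sort_perm]
  rw [hY.qdet_submatrix_eq_pow_mul_sort hq, hsort, Matrix.submatrix_id_id]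

end IsQManin

end QuantumDeterminant

theorem stmt3_general {R : Type*} [Ring R] (q : Rˣ) (hq : ∀ r : R, (q : R) * r = r * (q : R))
    {n : ℕ} (X Y : Matrix (Fin n) (Fin n) R) (hY : IsQManin q Y)
    (hcomm : ∀ (i j k l : Fin n), X i j * Y k l = Y k l * X i j) :
    qdet q (X * Y) = qdet q X * qdet q Y := by
  calc qdet q (X * Y)
      = ∑ f : Fin n → Fin n,
          (List.ofFn fun i => X i (f i)).prod * qdet q (Y.submatrix f id) :=
        qdet_mul_eq_sum hq X Y hcomm
    _ = ∑ σ : Equiv.Perm (Fin n),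
          (List.ofFn fun i => X i (σ i)).prod * qdet q (Y.submatrix σ id) :=
        sum_fun_eq_sum_perm _ fun f hf => by
          rw [hY.qdet_submatrix_of_not_injective hq hf, mul_zero]
    _ = ∑ σ, qdetTerm q X σ * qdet q Y := by
        refine Finset.sum_congr rfl fun σ _ => ?_
        rw [hY.qdet_submatrix_perm hq, ← mul_assoc, qdetTerm,
          ((commute_neg_inv hq _).pow_left _).eq]
    _ = qdet q X * qdet q Y := by rw [qdet_eq_sum_qdetTerm q X, Finset.sum_mul]

/-- Multiplicativity of the quantum determinant for `q`-generic matrices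
with mutually commuting entries. -/
theorem stmt3 {R : Type*} [Ring R] (q : Rˣ) (hq : ∀ r : R, (q : R) * r = r * (q : R))
    {n : ℕ} (X Y : Matrix (Fin n) (Fin n) R) (hX : qGeneric q X) (hY : qGeneric q Y)
    (hcomm : ∀ (i j k l : Fin n), X i j * Y k l = Y k l * X i j) :
    qdet q (X * Y) = qdet q X * qdet q Y :=
  stmt3_general q hq X Y hY.isQManin hcomm
end

section
/- Let R be a ring with a central invertible element q, and let X be an n×n q-generic matrix over R. Define the n×n matrix S(X) by S(X)_{ij} = (−q)^{j−i}·det_q(X^{ji}), where X^{ji} is the (n−1)×(n−1) matrix obtained from X by deleting row j and column i. Then S(X)·X = X·S(X) = (det_q X)·I_n, where I_n is the identity matrix. -/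
/-- The quantum adjugate `S(X)_{ij} = (-q)^{j-i} det_q (X^{ji})`, where `X^{ji}` is `X` with
row `j` and column `i` deleted. -/
def qAdjugate {R : Type*} [Ring R] {n : ℕ} (q : Rˣ) (X : Matrix (Fin (n+1)) (Fin (n+1)) R) :
    Matrix (Fin (n+1)) (Fin (n+1)) R :=
  Matrix.of fun i j =>
    (((-q) ^ ((j.val : ℤ) - (i.val : ℤ)) : Rˣ) : R) *
      qdet q (X.submatrix j.succAbove i.succAbove)

open Equiv Finset MulOpposite

open Matrix (vecCons)

section VecCons

variable {α : Type*} {n : ℕ}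

theorem vecCons_zero_comp_succ (s : Fin (n + 1) → α) : vecCons (s 0) (s ∘ Fin.succ) = s :=
  Matrix.cons_head_tail s

theorem comp_succ_succAbove (s : Fin (n + 2) → α) (j : Fin (n + 1)) :
    s ∘ j.succ.succAbove = vecCons (s 0) ((s ∘ Fin.succ) ∘ j.succAbove) := by
  ext i
  cases i using Fin.cases <;> simp

end VecCons

section Inversions

variable {α : Type*} [LinearOrder α] {m n : ℕ}

theorem tupleInv_succ (f : Fin (m + 1) → α) :
    tupleInv f = #{i : Fin m | f i.succ < f 0} + tupleInv fun i => f i.succ := by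
  simp only [tupleInv, card_filter, ← univ_product_univ, sum_product, Fin.sum_univ_succ,
    Fin.succ_lt_succ_iff, Fin.not_lt_zero, Fin.succ_pos, true_and, false_and, if_false, zero_add]

theorem tupleInv_succ_succ (f : Fin (m + 2) → α) :
    tupleInv f = (if f 1 < f 0 then 1 else 0) + #{i : Fin m | f i.succ.succ < f 0} +
      #{i : Fin m | f i.succ.succ < f 1} + tupleInv fun i => f i.succ.succ := by
  have hfirst : #{i : Fin (m + 1) | f i.succ < f 0} =
      (if f 1 < f 0 then 1 else 0) + #{i : Fin m | f i.succ.succ < f 0} := by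
    simp only [card_filter, Fin.sum_univ_succ]
    rfl
  rw [tupleInv_succ, tupleInv_succ, hfirst, ← add_assoc]
  rfl

theorem swap_zero_one_succ_succ (i : Fin m) :
    swap (0 : Fin (m + 2)) 1 i.succ.succ = i.succ.succ :=
  swap_apply_of_ne_of_ne (Fin.succ_ne_zero _) (by simp [Fin.ext_iff])

theorem tupleInv_comp_swap_zero_one {f : Fin (m + 2) → α} (hf : f 0 < f 1) :
    (tupleInv fun i => f (swap 0 1 i)) = tupleInv f + 1 := by
  rw [tupleInv_succ_succ, tupleInv_succ_succ f]
  simp only [swap_zero_one_succ_succ, swap_apply_left, swap_apply_right, hf, hf.not_gt, if_true,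
    if_false]
  ring

theorem tupleInv_symm (σ : Perm (Fin n)) : tupleInv σ.symm = tupleInv σ := by
  refine card_equiv ((prodComm _ _).trans (prodCongr σ.symm σ.symm)) fun p => ?_
  simp [and_comm]

theorem tupleInv_rev_comp_rev (f : Fin m → Fin n) :
    (tupleInv fun i => (f i.rev).rev) = tupleInv f := by
  refine card_equiv ((prodComm _ _).trans (prodCongr Fin.revPerm Fin.revPerm)) fun p => ?_
  simp

end Inversions

section ConsPerm

variable {n : ℕ}

/-- The permutation with `0 ↦ k` whose remaining values are those of `τ`, relabelled by
`k.succAbove`. It indexes the terms of the expansion of a determinant along the first row. -/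
def consPerm (k : Fin (n + 1)) (τ : Perm (Fin n)) : Perm (Fin (n + 1)) :=
  (finSuccEquiv' 0).trans (τ.optionCongr.trans (finSuccEquiv' k).symm)

@[simp]
theorem consPerm_zero (k : Fin (n + 1)) (τ : Perm (Fin n)) : consPerm k τ 0 = k := by
  simp [consPerm]

@[simp]
theorem consPerm_succ (k : Fin (n + 1)) (τ : Perm (Fin n)) (i : Fin n) :
    consPerm k τ i.succ = k.succAbove (τ i) := by
  simp [consPerm, ← Fin.succAbove_zero, -Fin.zero_succAbove]

theorem consPerm_bijective :
    Function.Bijective fun x : Fin (n + 1) × Perm (Fin n) => consPerm x.1 x.2 := by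
  rw [Fintype.bijective_iff_injective_and_card]
  refine ⟨?_, by simp [Fintype.card_perm, Nat.factorial_succ]⟩
  rintro ⟨k, τ⟩ ⟨k', τ'⟩ h
  obtain rfl : k = k' := by simpa using Equiv.congr_fun h 0
  exact Prod.ext rfl (Equiv.ext fun i => by simpa using Equiv.congr_fun h i.succ)

theorem tupleInv_consPerm (k : Fin (n + 1)) (τ : Perm (Fin n)) :
    tupleInv (consPerm k τ) = k + tupleInv τ := by
  simp only [tupleInv_succ, consPerm_zero, consPerm_succ, Fin.succAbove_lt_iff_castSucc_lt]
  congr 1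
  · calc #{i | (τ i).castSucc < k} = #{i : Fin n | i.castSucc < k} :=
          card_equiv τ fun i => by simp
      _ = k := Fin.card_filter_val_lt.trans (min_eq_right (by omega))
  · simp [tupleInv, Fin.succAbove_lt_succAbove_iff]

end ConsPerm

section InsertionSort

variable {α M : Type*} [Monoid M] (r : α → α → Prop) [DecidableRel r] (f : α → M)

theorem prod_map_orderedInsert_of_commute {a : α} {l : List α}
    (h : ∀ b ∈ l, r a b ∨ Commute (f a) (f b)) :
    ((l.orderedInsert r a).map f).prod = f a * (l.map f).prod := by
  induction l with
  | nil => simp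
  | cons b l ih =>
    rw [List.forall_mem_cons] at h
    rw [List.orderedInsert_cons]
    split_ifs with hab
    · simp
    · rw [List.map_cons, List.prod_cons, ih h.2, List.map_cons, List.prod_cons,
        (h.1.resolve_left hab).left_comm]

theorem prod_map_insertionSort_of_commute {l : List α}
    (h : l.Pairwise fun a b => r a b ∨ Commute (f a) (f b)) :
    ((l.insertionSort r).map f).prod = (l.map f).prod := by
  induction h with
  | nil => rfl
  | cons h _ ih =>
    rw [List.insertionSort_cons, prod_map_orderedInsert_of_commute, ih, List.map_cons,
      List.prod_cons]
    simpa using h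

theorem prod_ofFn_comp_symm_of_commute {n : ℕ} (σ : Perm (Fin n)) {g : Fin n → M}
    (hg : ∀ i j, i < j → σ j < σ i → Commute (g i) (g j)) :
    (List.ofFn fun i => g (σ.symm i)).prod = (List.ofFn g).prod := by
  have hsort : (List.finRange n).insertionSort (fun i j => σ i ≤ σ j) =
      (List.finRange n).map σ.symm := by
    refine List.Perm.eq_of_pairwise (le := fun i j => σ i ≤ σ j)
      (fun i j _ _ hij hji => σ.injective (hij.antisymm hji)) ?_ ?_
      ((List.perm_insertionSort _ _).trans (Perm.map_finRange_perm _).symm)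
    · exact List.pairwise_insertionSort _ _
    · simpa [List.pairwise_map] using (List.pairwise_lt_finRange n).imp le_of_lt
  calc (List.ofFn fun i => g (σ.symm i)).prod
      = (((List.finRange n).insertionSort fun i j => σ i ≤ σ j).map g).prod := by
        rw [hsort, List.map_map, List.ofFn_eq_map, Function.comp_def]
    _ = (List.ofFn g).prod := by
        rw [List.ofFn_eq_map]
        exact prod_map_insertionSort_of_commute _ g <| (List.pairwise_lt_finRange n).imp
          fun {i j} hij => (le_or_gt (σ i) (σ j)).imp_right (hg i j hij)

end InsertionSort

section Antitranspose

variable {R : Type*} {l m n : ℕ}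

/-- The transpose of `X` along the antidiagonal, with entries in the opposite ring. It exchanges the
two sides of a matrix product, and it preserves `q`-genericity. -/
def antitranspose (X : Matrix (Fin m) (Fin n) R) : Matrix (Fin n) (Fin m) Rᵐᵒᵖ :=
  Matrix.of fun i j => op (X j.rev i.rev)

theorem antitranspose_apply (X : Matrix (Fin m) (Fin n) R) (i : Fin n) (j : Fin m) :
    antitranspose X i j = op (X j.rev i.rev) :=
  rfl

theorem antitranspose_injective :
    Function.Injective (antitranspose : Matrix (Fin m) (Fin n) R → _) := by
  intro X Y h
  ext i j
  simpa [antitranspose_apply] using congrFun₂ h j.rev i.rev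

theorem antitranspose_mul [NonUnitalNonAssocSemiring R] (X : Matrix (Fin l) (Fin m) R)
    (Y : Matrix (Fin m) (Fin n) R) :
    antitranspose (X * Y) = antitranspose Y * antitranspose X := by
  ext i j
  simp only [antitranspose_apply, Matrix.mul_apply, op_sum, op_mul]
  exact (Equiv.sum_comp Fin.revPerm _).symm

theorem antitranspose_smul_one [NonAssocSemiring R] (r : R) :
    antitranspose (r • (1 : Matrix (Fin n) (Fin n) R)) = op r • 1 := by
  ext i j
  simp [antitranspose_apply, Matrix.one_apply, apply_ite op, Fin.rev_inj, eq_comm]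

theorem antitranspose_submatrix_succAbove (X : Matrix (Fin (m + 1)) (Fin (n + 1)) R)
    (i : Fin (n + 1)) (j : Fin (m + 1)) :
    (antitranspose X).submatrix i.succAbove j.succAbove =
      antitranspose (X.submatrix j.rev.succAbove i.rev.succAbove) := by
  ext a b
  simp only [antitranspose_apply, Matrix.submatrix_apply, Fin.rev_succAbove]

/-- The unit `u` of a monoid, regarded as a unit of the opposite monoid. -/
def opUnit {M : Type*} [Monoid M] (u : Mˣ) : Mᵐᵒᵖˣ :=
  Units.opEquiv.symm (op u)

end Antitranspose

section QuantumDeterminant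

variable {R : Type*} [Ring R] {q : Rˣ} {m n : ℕ}

local notation "ε" => (((-q)⁻¹ : Rˣ) : R)

theorem val_neg_zpow_mem_center (hq : (q : R) ∈ Set.center R) (z : ℤ) :
    (((-q) ^ z : Rˣ) : R) ∈ Set.center R := by
  have hneg : ((-q : Rˣ) : R) ∈ Set.center R := by
    rw [Units.val_neg]
    exact Set.neg_mem_center hq
  exact Semigroup.mem_center_iff.2 fun r => (hneg.comm r).symm.units_zpow_right z

theorem val_neg_zpow_neg_natCast (k : ℕ) : (((-q) ^ (-(k : ℤ)) : Rˣ) : R) = ε ^ k := by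
  rw [zpow_neg, zpow_natCast, ← inv_pow, Units.val_pow_eq_pow_val]

theorem val_neg_inv_pow_mem_center (hq : (q : R) ∈ Set.center R) (k : ℕ) :
    ε ^ k ∈ Set.center R :=
  val_neg_zpow_neg_natCast (q := q) k ▸ val_neg_zpow_mem_center hq (-k)

theorem qdet_eq_sum_pow (A : Matrix (Fin n) (Fin n) R) :
    qdet q A = ∑ σ : Perm (Fin n), ε ^ tupleInv σ * (List.ofFn fun i => A i (σ i)).prod := by
  simp only [qdet, val_neg_zpow_neg_natCast]

theorem qdet_succ_row_zero (hq : (q : R) ∈ Set.center R)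
    (A : Matrix (Fin (n + 1)) (Fin (n + 1)) R) :
    qdet q A = ∑ k : Fin (n + 1),
      ε ^ (k : ℕ) * (A 0 k * qdet q (A.submatrix Fin.succ k.succAbove)) := by
  rw [qdet_eq_sum_pow, ← consPerm_bijective.sum_comp, Fintype.sum_prod_type]
  refine sum_congr rfl fun k _ => ?_
  simp only [qdet_eq_sum_pow, mul_sum]
  refine sum_congr rfl fun τ _ => ?_
  simp only [tupleInv_consPerm, List.ofFn_succ, List.prod_cons, consPerm_zero, consPerm_succ,
    Matrix.submatrix_apply, pow_add, mul_assoc]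
  rw [((val_neg_inv_pow_mem_center hq (tupleInv τ)).comm (A 0 k)).left_comm]

theorem qdet_submatrix_vecCons (hq : (q : R) ∈ Set.center R) {ι : Type*}
    (X : Matrix ι (Fin (n + 1)) R) (a : ι) (r : Fin n → ι) :
    qdet q (X.submatrix (vecCons a r) id) =
      ∑ k : Fin (n + 1), ε ^ (k : ℕ) * (X a k * qdet q (X.submatrix r k.succAbove)) :=
  qdet_succ_row_zero hq _

theorem qdet_submatrix_vecCons_eq_mul (hq : (q : R) ∈ Set.center R) {ι : Type*}
    {X : Matrix ι (Fin (n + 1)) R} {r s : Fin n → ι} {u : R} (hu : u ∈ Set.center R)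
    (h : ∀ k : Fin (n + 1), qdet q (X.submatrix r k.succAbove) =
      u * qdet q (X.submatrix s k.succAbove)) (a : ι) :
    qdet q (X.submatrix (vecCons a r) id) = u * qdet q (X.submatrix (vecCons a s) id) := by
  simp only [qdet_submatrix_vecCons hq, mul_sum]
  refine sum_congr rfl fun k _ => ?_
  rw [h k, (hu.comm (X a k)).symm.left_comm, (hu.comm (ε ^ (k : ℕ))).left_comm]

theorem qdet_fin_two (A : Matrix (Fin 2) (Fin 2) R) :
    qdet q A = A 0 0 * A 1 1 + ε * (A 0 1 * A 1 0) := by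
  have huniv : (univ : Finset (Perm (Fin 2))) = {1, swap 0 1} := by decide
  have hone : tupleInv ⇑(1 : Perm (Fin 2)) = 0 := by decide
  have hswap : tupleInv ⇑(swap (0 : Fin 2) 1) = 1 := by decide
  rw [qdet_eq_sum_pow, huniv, sum_pair (by decide), hone, hswap]
  simp

theorem qdet_eq_sum_mul_first_two_rows (A : Matrix (Fin (n + 2)) (Fin (n + 2)) R) :
    qdet q A = ∑ σ : Perm (Fin (n + 2)) with σ 0 < σ 1,
      ε ^ tupleInv σ * (qdet q (A.submatrix ![0, 1] ![σ 0, σ 1]) *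
        (List.ofFn fun i : Fin n => A i.succ.succ (σ i.succ.succ)).prod) := by
  have hreindex : ∑ σ : Perm (Fin (n + 2)) with ¬ σ 0 < σ 1,
        ε ^ tupleInv σ * (List.ofFn fun i => A i (σ i)).prod =
      ∑ σ : Perm (Fin (n + 2)) with σ 0 < σ 1,
        ε ^ (tupleInv fun i => σ (swap 0 1 i)) *
          (List.ofFn fun i => A i (σ (swap 0 1 i))).prod := by
    refine (sum_equiv (Equiv.mulRight (swap 0 1)) (fun σ => ?_) fun σ _ => rfl).symm
    simp [le_iff_lt_or_eq]
  rw [qdet_eq_sum_pow, ← sum_filter_add_sum_filter_not univ fun σ : Perm _ => σ 0 < σ 1, hreindex,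
    ← sum_add_distrib]
  refine sum_congr rfl fun σ hσ => ?_
  rw [tupleInv_comp_swap_zero_one (mem_filter.1 hσ).2, qdet_fin_two]
  simp only [pow_succ, List.ofFn_succ, List.prod_cons, swap_zero_one_succ_succ,
    Fin.succ_zero_eq_one, swap_apply_left, swap_apply_right, Matrix.submatrix_apply,
    Matrix.cons_val_zero, Matrix.cons_val_one, add_mul, mul_add, mul_assoc]

namespace qGeneric

theorem submatrix {X : Matrix (Fin m) (Fin n) R} (hX : qGeneric q X) {m' n' : ℕ}
    {r : Fin m' → Fin m} {c : Fin n' → Fin n} (hr : StrictMono r) (hc : StrictMono c) :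
    qGeneric q (X.submatrix r c) :=
  ⟨fun k _ _ h => hX.1 (r k) _ _ (hc h), fun _ _ k h => hX.2.1 _ _ (c k) (hr h),
    fun _ _ _ _ h h' => hX.2.2.1 _ _ _ _ (hr h) (hc h'),
    fun _ _ _ _ h h' => hX.2.2.2 _ _ _ _ (hr h) (hc h')⟩

theorem qdet_two_repeated_row {X : Matrix (Fin m) (Fin n) R} (hX : qGeneric q X) (i : Fin m)
    {k l : Fin n} (hkl : k < l) :
    qdet q (X.submatrix ![i, i] ![k, l]) = 0 := by
  rw [qdet_fin_two]
  simp [hX.1 i k l hkl]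

theorem qdet_two_swap_rows {X : Matrix (Fin m) (Fin n) R} (hX : qGeneric q X)
    {i j : Fin m} (hij : i < j) {k l : Fin n} (hkl : k < l) :
    qdet q (X.submatrix ![j, i] ![k, l]) = ε * qdet q (X.submatrix ![i, j] ![k, l]) := by
  rw [qdet_fin_two, qdet_fin_two]
  simp only [Matrix.submatrix_apply, Matrix.cons_val_zero, Matrix.cons_val_one,
    hX.2.2.1 i j k l hij hkl, hX.2.2.2 i j k l hij hkl, inv_neg, Units.val_neg, neg_mul, mul_add,
    mul_neg, neg_neg, sub_mul, mul_sub, Units.inv_mul_cancel_left]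
  abel

theorem qdet_repeated_first_row {X : Matrix (Fin m) (Fin (n + 2)) R} (hX : qGeneric q X)
    (i : Fin m) (r : Fin n → Fin m) : qdet q (X.submatrix (vecCons i (vecCons i r)) id) = 0 := by
  rw [qdet_eq_sum_mul_first_two_rows]
  refine sum_eq_zero fun σ hσ => ?_
  have hminor : (X.submatrix (vecCons i (vecCons i r)) id).submatrix ![0, 1] ![σ 0, σ 1] =
      X.submatrix ![i, i] ![σ 0, σ 1] := by
    ext a b
    fin_cases a <;> rfl
  rw [hminor, hX.qdet_two_repeated_row i (mem_filter.1 hσ).2, zero_mul, mul_zero]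

theorem qdet_swap_first_rows {X : Matrix (Fin m) (Fin (n + 2)) R} (hX : qGeneric q X)
    {i j : Fin m} (hij : i < j) (r : Fin n → Fin m) :
    qdet q (X.submatrix (vecCons j (vecCons i r)) id) =
      ε * qdet q (X.submatrix (vecCons i (vecCons j r)) id) := by
  rw [qdet_eq_sum_mul_first_two_rows, qdet_eq_sum_mul_first_two_rows, mul_sum]
  refine sum_congr rfl fun σ hσ => ?_
  have hminor (a b : Fin m) :
      (X.submatrix (vecCons a (vecCons b r)) id).submatrix ![0, 1] ![σ 0, σ 1] =
        X.submatrix ![a, b] ![σ 0, σ 1] := by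
    ext c d
    fin_cases c <;> rfl
  rw [hminor, hminor, hX.qdet_two_swap_rows hij (mem_filter.1 hσ).2, ← mul_assoc, ← mul_assoc,
    ← mul_assoc, ← mul_assoc, pow_mul_comm']
  rfl

theorem qdet_vecCons_comp_succAbove (hq : (q : R) ∈ Set.center R)
    {X : Matrix (Fin m) (Fin (n + 1)) R} (hX : qGeneric q X) {s : Fin (n + 1) → Fin m}
    (hs : StrictMono s) (j : Fin (n + 1)) :
    qdet q (X.submatrix (vecCons (s j) (s ∘ j.succAbove)) id) =
      ε ^ (j : ℕ) * qdet q (X.submatrix s id) := by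
  induction n with
  | zero => simp [Fin.fin_one_eq_zero j, vecCons_zero_comp_succ]
  | succ n ih =>
    cases j using Fin.cases with
    | zero => simp [vecCons_zero_comp_succ]
    | succ j =>
      have hmove := qdet_submatrix_vecCons_eq_mul hq (X := X) (s := s ∘ Fin.succ)
        (r := vecCons (s j.succ) ((s ∘ Fin.succ) ∘ j.succAbove)) (val_neg_inv_pow_mem_center hq j)
        (fun k => ih (hX.submatrix strictMono_id (Fin.strictMono_succAbove k))
          (hs.comp Fin.strictMono_succ) j) (s 0)
      rw [vecCons_zero_comp_succ] at hmove
      rw [comp_succ_succAbove, hX.qdet_swap_first_rows (hs j.succ_pos), Fin.val_succ, pow_succ',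
        mul_assoc, ← hmove]

theorem qdet_vecCons_eq_zero (hq : (q : R) ∈ Set.center R)
    {X : Matrix (Fin m) (Fin (n + 1)) R} (hX : qGeneric q X) {r : Fin n → Fin m}
    (hr : StrictMono r) (j : Fin n) : qdet q (X.submatrix (vecCons (r j) r) id) = 0 := by
  induction n with
  | zero => exact j.elim0
  | succ n ih =>
    rw [← vecCons_zero_comp_succ r]
    cases j using Fin.cases with
    | zero => exact hX.qdet_repeated_first_row _ _
    | succ j =>
      have hmove := qdet_submatrix_vecCons_eq_mul hq (X := X) (s := r)
        (r := vecCons (r j.succ) (r ∘ Fin.succ)) Set.zero_mem_center (fun k => by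
          rw [zero_mul]
          exact ih (hX.submatrix strictMono_id (Fin.strictMono_succAbove k))
            (hr.comp Fin.strictMono_succ) j) (r 0)
      rw [Matrix.cons_val_succ, Function.comp_apply, hX.qdet_swap_first_rows (hr j.succ_pos),
        hmove, zero_mul, mul_zero]

theorem mul_qAdjugate (hq : (q : R) ∈ Set.center R)
    {X : Matrix (Fin (n + 1)) (Fin (n + 1)) R} (hX : qGeneric q X) :
    X * qAdjugate q X = qdet q X • (1 : Matrix (Fin (n + 1)) (Fin (n + 1)) R) := by
  ext i j
  have hterm (k : Fin (n + 1)) : X i k * qAdjugate q X k j = (((-q) ^ (j : ℤ) : Rˣ) : R) *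
      (ε ^ (k : ℕ) * (X i k * qdet q (X.submatrix j.succAbove k.succAbove))) := by
    rw [qAdjugate, Matrix.of_apply, sub_eq_add_neg, zpow_add, Units.val_mul,
      val_neg_zpow_neg_natCast, mul_assoc,
      ((val_neg_zpow_mem_center hq j).comm (X i k)).symm.left_comm,
      ((val_neg_inv_pow_mem_center hq k).comm (X i k)).symm.left_comm]
  rw [Matrix.mul_apply, sum_congr rfl fun k _ => hterm k, ← mul_sum, ← qdet_submatrix_vecCons hq,
    Matrix.smul_apply, Matrix.one_apply]
  split_ifs with hij
  · subst hij
    have hdet : qdet q (X.submatrix (vecCons i i.succAbove) id) = ε ^ (i : ℕ) * qdet q X :=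
      hX.qdet_vecCons_comp_succAbove hq strictMono_id i
    rw [hdet, ← mul_assoc, ← val_neg_zpow_neg_natCast, ← Units.val_mul, ← zpow_add, add_neg_cancel,
      zpow_zero, Units.val_one, one_mul, smul_eq_mul, mul_one]
  · obtain ⟨l, rfl⟩ := Fin.exists_succAbove_eq hij
    rw [hX.qdet_vecCons_eq_zero hq (Fin.strictMono_succAbove j), mul_zero, smul_zero]

end qGeneric

theorem val_neg_opUnit_zpow (z : ℤ) :
    (((-opUnit q) ^ z : Rᵐᵒᵖˣ) : Rᵐᵒᵖ) = op (((-q) ^ z : Rˣ) : R) := by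
  have hneg : -opUnit q = opUnit (-q) := Units.ext rfl
  rw [hneg, opUnit, ← map_zpow, ← op_zpow, Units.coe_opEquiv_symm, unop_op]

protected theorem qGeneric.antitranspose (hq : (q : R) ∈ Set.center R)
    {X : Matrix (Fin m) (Fin n) R} (hX : qGeneric q X) :
    qGeneric (opUnit q) (antitranspose X) := by
  have hq' : (q : R) - ((q⁻¹ : Rˣ) : R) ∈ Set.center R := by
    rw [sub_eq_add_neg]
    exact Set.add_mem_center hq (Set.neg_mem_center (Set.units_inv_mem_center hq))
  obtain ⟨hrow, hcol, hanti, hdiag⟩ := hX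
  refine ⟨fun k i j hij => ?_, fun i j k hij => ?_, fun i j k l hij hkl => ?_,
    fun i j k l hij hkl => ?_⟩ <;> apply unop_injective
  · exact (hcol _ _ _ (Fin.rev_lt_rev.2 hij)).trans (hq.comm _)
  · exact (hrow _ _ _ (Fin.rev_lt_rev.2 hij)).trans (hq.comm _)
  · exact (hanti _ _ _ _ (Fin.rev_lt_rev.2 hkl) (Fin.rev_lt_rev.2 hij)).symm
  · have hji := Fin.rev_lt_rev.2 hij
    have hlk := Fin.rev_lt_rev.2 hkl
    refine (hdiag _ _ _ _ hlk hji).trans ?_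
    rw [(hq'.comm _).eq, ← hanti _ _ _ _ hlk hji]
    rfl

theorem qGeneric.qdet_transpose {X : Matrix (Fin n) (Fin n) R} (hX : qGeneric q X) :
    qdet q X.transpose = qdet q X := by
  rw [qdet_eq_sum_pow, qdet_eq_sum_pow, ← Equiv.sum_comp (Equiv.inv _)]
  refine sum_congr rfl fun σ _ => ?_
  have hprod := prod_ofFn_comp_symm_of_commute σ (g := fun i => X i (σ i)) fun i j hij hσ =>
    (hX.2.2.1 i j (σ j) (σ i) hij hσ).symm
  simp only [apply_symm_apply] at hprod
  exact congrArg₂ (fun k p => ε ^ k * p) (tupleInv_symm σ) hprod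

theorem qdet_antitranspose_transpose (hq : (q : R) ∈ Set.center R)
    (A : Matrix (Fin n) (Fin n) R) :
    qdet (opUnit q) (antitranspose A.transpose) = op (qdet q A) := by
  have hprod (σ : Perm (Fin n)) :
      (List.ofFn fun i => antitranspose A.transpose i (Fin.revPerm.permCongr σ i)).prod =
        op (List.ofFn fun i => A i (σ i)).prod := by
    rw [op_list_prod, List.ofFn_eq_map, List.ofFn_eq_map, List.map_map, ← List.map_reverse,
      List.finRange_reverse, List.map_map]
    simp [Function.comp_def, antitranspose_apply]
  rw [qdet, qdet, op_sum, ← Equiv.sum_comp Fin.revPerm.permCongr]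
  refine sum_congr rfl fun σ _ => ?_
  have hinv : tupleInv (fun i => Fin.revPerm.permCongr σ i) = tupleInv fun i => σ i :=
    tupleInv_rev_comp_rev σ
  rw [hprod, hinv, val_neg_opUnit_zpow, ← op_mul, ((val_neg_zpow_mem_center hq _).comm _).eq]

theorem qGeneric.qdet_antitranspose (hq : (q : R) ∈ Set.center R)
    {X : Matrix (Fin n) (Fin n) R} (hX : qGeneric q X) :
    qdet (opUnit q) (antitranspose X) = op (qdet q X) := by
  rw [← hX.qdet_transpose, ← qdet_antitranspose_transpose hq, Matrix.transpose_transpose]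

theorem qGeneric.qAdjugate_antitranspose (hq : (q : R) ∈ Set.center R)
    {X : Matrix (Fin (n + 1)) (Fin (n + 1)) R} (hX : qGeneric q X) :
    qAdjugate (opUnit q) (antitranspose X) = antitranspose (qAdjugate q X) := by
  ext i j
  have hexp : (j : ℤ) - i = (i.rev : ℕ) - (j.rev : ℕ) := by
    simp only [Fin.val_rev]
    omega
  have hminor := (hX.submatrix (Fin.strictMono_succAbove i.rev)
    (Fin.strictMono_succAbove j.rev)).qdet_antitranspose hq
  rw [antitranspose_apply, qAdjugate, qAdjugate, Matrix.of_apply, Matrix.of_apply,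
    antitranspose_submatrix_succAbove, hminor, val_neg_opUnit_zpow, ← op_mul, hexp,
    ((val_neg_zpow_mem_center hq _).comm _).eq]

theorem qGeneric.qAdjugate_mul (hq : (q : R) ∈ Set.center R)
    {X : Matrix (Fin (n + 1)) (Fin (n + 1)) R} (hX : qGeneric q X) :
    qAdjugate q X * X = qdet q X • (1 : Matrix (Fin (n + 1)) (Fin (n + 1)) R) := by
  refine antitranspose_injective ?_
  rw [antitranspose_mul, ← hX.qAdjugate_antitranspose hq, antitranspose_smul_one,
    ← hX.qdet_antitranspose hq]
  exact (hX.antitranspose hq).mul_qAdjugate (op_mem_center_iff.2 hq)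

end QuantumDeterminant

/-- `S(X)·X = X·S(X) = (det_q X)·I` for a `q`-generic matrix `X`. -/
theorem stmt4 {R : Type*} [Ring R] (q : Rˣ) (hq : ∀ r : R, (q : R) * r = r * (q : R))
    {n : ℕ} (X : Matrix (Fin (n+1)) (Fin (n+1)) R) (hX : qGeneric q X) :
    qAdjugate q X * X = qdet q X • (1 : Matrix (Fin (n+1)) (Fin (n+1)) R) ∧
    X * qAdjugate q X = qdet q X • (1 : Matrix (Fin (n+1)) (Fin (n+1)) R) := by
  have hcenter : (q : R) ∈ Set.center R := Semigroup.mem_center_iff.2 fun r => (hq r).symm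
  exact ⟨hX.qAdjugate_mul hcenter, hX.mul_qAdjugate hcenter⟩
end

section
/- Let R be a ring with a central invertible element q and let X be an n×d q-generic matrix over R. Let I = {i_1 < i_2 < ⋯ < i_{d+1}} be a subset of {1,…,n} of size d+1 and let J = (j_1,…,j_{d−1}) be a tuple of d−1 elements of {1,…,n}. Then the quantum minors of X satisfy the quantized Young symmetry (quantum Plücker) relation: ∑_{λ=1}^{d+1} (−q)^{−(d+1−λ)} · [I∖{i_λ}] · [i_λ|J] = 0, where [I∖{i_λ}] is the quantum minor on rows I∖{i_λ} in increasing order and [i_λ|J] is the quantum minor on the row tuple (i_λ, j_1,…,j_{d−1}) in that order. -/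
/-- The quantum minor of a row tuple `K`: `det_q` of the matrix whose `(s,t)` entry is
`X (K s) t` (rows `K` of `X` in the given order, first `k` columns). -/
def qminorT {R : Type*} [Ring R] {n d : ℕ} (q : Rˣ) (X : Matrix (Fin n) (Fin d) R)
    {k : ℕ} (hk : k ≤ d) (K : Fin k → Fin n) : R :=
  qdet q (Matrix.of fun s t => X (K s) (Fin.castLE hk t))

/-- The quantum minor `[K]` of a finite row set `K` (rows in increasing order). -/
def qminor {R : Type*} [Ring R] {n m : ℕ} (q : Rˣ) (X : Matrix (Fin n) (Fin m) R)
    {k : ℕ} (hk : k ≤ m) (K : Finset (Fin n)) (hK : K.card = k) : R :=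
  qdet q (Matrix.of fun s t => X (K.orderIsoOfFin hK s) (Fin.castLE hk t))

open Finset

section Enumerations

variable {ι : Type*} [LinearOrder ι] {m : ℕ}

theorem tupleInv_comp_of_strictMono {κ : Type*} [LinearOrder κ] {e : ι → κ} (he : StrictMono e)
    (f : Fin m → ι) : tupleInv (e ∘ f) = tupleInv f := by
  simp only [tupleInv, Function.comp_apply, he.lt_iff_lt]

theorem tupleInv_perm_symm (σ : Equiv.Perm (Fin m)) : tupleInv σ.symm = tupleInv σ := by
  refine Finset.card_bij' (fun p _ => (σ.symm p.2, σ.symm p.1)) (fun p _ => (σ p.2, σ p.1))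
    ?_ ?_ ?_ ?_ <;> simp +contextual

theorem tupleInv_snoc (g : Fin m → ι) (i : ι) :
    tupleInv (Fin.snoc g i : Fin (m + 1) → ι) = tupleInv g + #{k | i < g k} := by
  have hlast : ∀ k : Fin m, ¬ Fin.last m < k.castSucc := fun k => (Fin.castSucc_lt_last k).not_gt
  simp only [tupleInv, card_filter, Fintype.sum_prod_type, Fin.sum_univ_castSucc,
    Fin.snoc_castSucc, Fin.snoc_last, Fin.castSucc_lt_castSucc_iff, Fin.castSucc_lt_last, hlast,
    lt_irrefl, true_and, false_and, if_false, sum_const_zero, add_zero, sum_add_distrib]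

variable [Fintype ι]

/-- The enumerations of a finite set `S` by `Fin m`: the words of length `m` in which every element
of `S`, and nothing else, occurs exactly once. They index the terms of a quantum minor on the rows
`S`; there are none unless `S` has `m` elements. -/
def enumerations (m : ℕ) (S : Finset ι) : Finset (Fin m → ι) :=
  {f | Function.Injective f ∧ univ.image f = S}

theorem mem_enumerations {S : Finset ι} {f : Fin m → ι} :
    f ∈ enumerations m S ↔ Function.Injective f ∧ univ.image f = S := by
  simp [enumerations]

theorem snoc_mem_enumerations {S : Finset ι} {g : Fin m → ι} {i : ι} :
    (Fin.snoc g i : Fin (m + 1) → ι) ∈ enumerations (m + 1) S ↔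
      i ∈ S ∧ g ∈ enumerations m (S.erase i) := by
  have himage : univ.image (Fin.snoc g i : Fin (m + 1) → ι) = insert i (univ.image g) := by
    ext x
    simp [Fin.exists_fin_succ', or_comm, eq_comm]
  rw [mem_enumerations, mem_enumerations, himage, Fin.snoc_injective_iff]
  constructor
  · rintro ⟨⟨hg, hi⟩, rfl⟩
    exact ⟨mem_insert_self _ _, hg, (erase_insert (by simpa using hi)).symm⟩
  · rintro ⟨hi, hg, hS⟩
    refine ⟨⟨hg, fun h => ?_⟩, by rw [hS, insert_erase hi]⟩
    have : i ∈ univ.image g := by simpa using h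
    simp [hS] at this

theorem card_filter_lt_of_mem_enumerations {S : Finset ι} {g : Fin m → ι} {i : ι}
    (hg : g ∈ enumerations m (S.erase i)) : #{k | i < g k} = #{j ∈ S | i < j} := by
  obtain ⟨hinj, himage⟩ := mem_enumerations.1 hg
  rw [← card_image_of_injective _ hinj, ← filter_image (p := (i < ·)), himage, filter_erase,
    erase_eq_of_notMem (by simp)]

theorem sum_enumerations_succ {M : Type*} [AddCommMonoid M] (S : Finset ι)
    (F : (Fin (m + 1) → ι) → M) :
    ∑ f ∈ enumerations (m + 1) S, F f =
      ∑ i ∈ S, ∑ g ∈ enumerations m (S.erase i), F (Fin.snoc g i) := by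
  rw [sum_sigma']
  refine (sum_bij' (fun x _ => Fin.snoc x.2 x.1) (fun f _ => ⟨f (Fin.last m), Fin.init f⟩)
    ?_ ?_ ?_ ?_ ?_).symm
  · exact fun x hx => snoc_mem_enumerations.2 (mem_sigma.1 hx)
  · exact fun f hf => mem_sigma.2 (snoc_mem_enumerations.1 (by rwa [Fin.snoc_init_self]))
  all_goals simp

theorem sum_enumerations_eq_sum_perm {M : Type*} [AddCommMonoid M] {S : Finset ι} (hS : #S = m)
    (F : (Fin m → ι) → M) :
    ∑ f ∈ enumerations m S, F f = ∑ σ : Equiv.Perm (Fin m), F (S.orderEmbOfFin hS ∘ σ) := by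
  have hinj : Function.Injective (S.orderEmbOfFin hS) := (S.orderEmbOfFin hS).injective
  refine (sum_bij (fun (σ : Equiv.Perm (Fin m)) _ => S.orderEmbOfFin hS ∘ σ)
    ?_ ?_ ?_ fun _ _ => rfl).symm
  · intro σ _
    refine mem_enumerations.2 ⟨hinj.comp σ.injective, ?_⟩
    rw [← image_image, image_univ_equiv, image_orderEmbOfFin_univ]
  · exact fun σ _ τ _ h => DFunLike.coe_injective (funext fun t => hinj (congrFun h t))
  · intro f hf
    obtain ⟨hf, himage⟩ := mem_enumerations.1 hf
    have hmem : ∀ k, ∃ t, S.orderEmbOfFin hS t = f k := fun k => by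
      rw [← Set.mem_range, range_orderEmbOfFin, ← himage]
      simp
    choose g hg using hmem
    have hginj : Function.Injective g := fun a b h => hf (by rw [← hg, ← hg, h])
    exact ⟨Equiv.ofBijective g (Finite.injective_iff_bijective.1 hginj), mem_univ _, funext hg⟩

end Enumerations

theorem card_filter_orderIsoOfFin_lt {ι : Type*} [LinearOrder ι] {m : ℕ} {S : Finset ι}
    (hS : #S = m) (s : Fin m) : #{j ∈ S | ↑(S.orderIsoOfFin hS s) < j} = m - 1 - s := by
  have hmap (e : Fin m ↪o ι) : #{j ∈ univ.map e.toEmbedding | e s < j} = m - 1 - s := by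
    rw [filter_map, card_map, ← Fin.card_Ioi]
    congr 1
    ext t
    simp
  have h := hmap (S.orderEmbOfFin hS)
  rwa [map_orderEmbOfFin_univ] at h

theorem prod_map_eq_of_perm_of_commute {α M : Type*} [Monoid M] {r : α → α → Prop} {f : α → M}
    {l₁ l₂ : List α} (hperm : l₁.Perm l₂) (hsorted : l₂.Pairwise r)
    (hcomm : l₁.Pairwise fun a b => r b a → Commute (f a) (f b)) :
    (l₁.map f).prod = (l₂.map f).prod := by
  induction l₂ generalizing l₁ with
  | nil => rw [hperm.eq_nil]
  | cons b l₂ ih =>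
    obtain ⟨u, v, rfl⟩ := List.append_of_mem (hperm.mem_iff.2 List.mem_cons_self)
    obtain ⟨hb, hsorted⟩ := List.pairwise_cons.1 hsorted
    have htail : (u ++ v).Perm l₂ := (List.perm_middle.symm.trans hperm).cons_inv
    have hsub : (u ++ v).Sublist (u ++ b :: v) := (List.sublist_cons_self b v).append_left u
    have hub : Commute (u.map f).prod (f b) := by
      refine Commute.list_prod_left _ _ fun y hy => ?_
      obtain ⟨a, ha, rfl⟩ := List.mem_map.1 hy
      exact (List.pairwise_append.1 hcomm).2.2 a ha b List.mem_cons_self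
        (hb a (htail.subset (List.mem_append_left v ha)))
    have hmove : ((u ++ b :: v).map f).prod = f b * ((u ++ v).map f).prod := by
      simp only [List.map_append, List.map_cons, List.prod_append, List.prod_cons]
      rw [← mul_assoc, hub.eq, mul_assoc]
    rw [hmove, ih htail hsorted (hcomm.sublist hsub), List.map_cons, List.prod_cons]

/-- The part of `q`-genericity that relates the sums defining row and column quantum determinants:
`x_{jk}` and `x_{il}` commute for `i < j` and `k < l`. -/
def CommuteAntidiagonally {ι κ R : Type*} [LT ι] [LT κ] [Mul R] (X : Matrix ι κ R) : Prop :=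
  ∀ ⦃i j : ι⦄ ⦃k l : κ⦄, i < j → k < l → Commute (X j k) (X i l)

theorem CommuteAntidiagonally.prod_rows_eq_prod_cols {M : Type*} [Monoid M] {m : ℕ}
    {A : Matrix (Fin m) (Fin m) M} (hA : CommuteAntidiagonally A) (σ : Equiv.Perm (Fin m)) :
    (List.ofFn fun i => A i (σ i)).prod = (List.ofFn fun k => A (σ.symm k) k).prod := by
  have hperm : (List.finRange m).Perm (List.ofFn σ.symm) := by
    rw [← List.ofFn_id]
    exact (Equiv.Perm.ofFn_comp_perm σ.symm id).symm
  have hsorted : (List.ofFn σ.symm).Pairwise fun i j => σ i < σ j := by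
    simp [List.pairwise_ofFn]
  have hcomm : (List.finRange m).Pairwise
      fun i j => σ j < σ i → Commute (A i (σ i)) (A j (σ j)) :=
    (List.pairwise_lt_finRange m).imp fun {i j} hij (hσ : σ j < σ i) => (hA hij hσ).symm
  have h := prod_map_eq_of_perm_of_commute (f := fun i => A i (σ i)) hperm hsorted hcomm
  rw [List.map_ofFn] at h
  rw [List.ofFn_eq_map, h]
  simp [Function.comp_def]

section QuantumDeterminant

variable {R : Type*} [Ring R] {q : Rˣ}

theorem coe_zpow_neg_mul (q : Rˣ) (k : ℕ) (x : R) :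
    (((-q) ^ (-(k : ℤ)) : Rˣ) : R) * x = ((-q)⁻¹ ^ k) • x := by
  rw [zpow_neg, zpow_natCast, inv_pow, Units.smul_def, smul_eq_mul]

theorem qdet_eq_sum_cols {m : ℕ} {A : Matrix (Fin m) (Fin m) R} (hA : CommuteAntidiagonally A) :
    qdet q A = ∑ σ : Equiv.Perm (Fin m),
      ((-q)⁻¹ ^ tupleInv σ) • (List.ofFn fun k => A (σ k) k).prod := by
  refine Fintype.sum_equiv (Equiv.inv (Equiv.Perm (Fin m))) _ _ fun σ => ?_
  rw [coe_zpow_neg_mul, hA.prod_rows_eq_prod_cols, Equiv.inv_apply, Equiv.Perm.inv_def,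
    tupleInv_perm_symm]

theorem mul_units_smul_of_commute {M : Type*} [Monoid M] {u : Mˣ} {x : M}
    (h : Commute (u : M) x) (y : M) : x * (u • y) = u • (x * y) := by
  rw [Units.smul_def, Units.smul_def, smul_eq_mul, smul_eq_mul, ← mul_assoc, ← h.eq, mul_assoc]

theorem commute_val_inv_neg_pow (hq : ∀ x : R, Commute (q : R) x) (k : ℕ) (x : R) :
    Commute (((-q)⁻¹ ^ k : Rˣ) : R) x := by
  have hneg : Commute ((-q : Rˣ) : R) x := (hq x).neg_left
  simpa only [Units.val_pow_eq_pow_val] using hneg.units_inv_left.pow_left k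

theorem qdet_vecCons_eq_sum (hq : ∀ x : R, Commute (q : R) x) {k : ℕ}
    (r : Fin (k + 1) → R) (Y : Fin k → Fin (k + 1) → R) :
    qdet q (Matrix.of (Matrix.vecCons r Y)) =
      ∑ c, r c * qdet q (Matrix.of (Matrix.vecCons (Pi.single c 1) Y)) := by
  simp only [qdet, coe_zpow_neg_mul, mul_sum,
    fun k x => mul_units_smul_of_commute (commute_val_inv_neg_pow hq k x)]
  rw [sum_comm]
  refine sum_congr rfl fun σ _ => ?_
  rw [← smul_sum]
  simp [List.ofFn_succ, Pi.single_apply]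

end QuantumDeterminant

section QuantumExteriorAlgebra

variable {R : Type*} [Ring R] {q : Rˣ} {ι κ : Type*} [LinearOrder ι]

/-- Right multiplication by `y_c = ∑_i x_{ic} ξ_i` in the quantum exterior algebra over `R` on
generators `ξ_i` with `ξ_i² = 0` and `ξ_j ξ_i = (-q)⁻¹ ξ_i ξ_j` for `i < j`. An element is encoded
by the family `f` of its coefficients on the increasing monomials `ξ_S`; the exponent counts the
generators that `ξ_i` has to pass to reach its place in `ξ_S`. -/
def mulCol (q : Rˣ) (X : Matrix ι κ R) (f : Finset ι → R) (c : κ) : Finset ι → R :=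
  fun S => ∑ i ∈ S, (-q)⁻¹ ^ #{j ∈ S | i < j} • (f (S.erase i) * X i c)

theorem zero_mulCol (X : Matrix ι κ R) (c : κ) : mulCol q X 0 c = 0 := by
  ext S
  simp [mulCol]

theorem foldl_mulCol_apply [Fintype ι] (X : Matrix ι κ R) {m : ℕ} (c : Fin m → κ)
    (S : Finset ι) :
    (List.ofFn c).foldl (mulCol q X) (Pi.single ∅ 1) S =
      ∑ f ∈ enumerations m S, (-q)⁻¹ ^ tupleInv f • (List.ofFn fun k => X (f k) (c k)).prod := by
  induction m generalizing S with
  | zero =>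
    rcases S.eq_empty_or_nonempty with rfl | hS
    · simp [enumerations, tupleInv, Function.injective_of_subsingleton]
    · simp [enumerations, hS.ne_empty, hS.ne_empty.symm]
  | succ m ih =>
    rw [List.ofFn_succ', List.concat_eq_append, List.foldl_append, List.foldl_cons, List.foldl_nil,
      mulCol, sum_enumerations_succ]
    refine sum_congr rfl fun i _ => ?_
    rw [ih, sum_mul, smul_sum]
    refine sum_congr rfl fun g hg => ?_
    rw [tupleInv_snoc, card_filter_lt_of_mem_enumerations hg, add_comm, pow_add, smul_mul_assoc,
      smul_smul, List.ofFn_succ', List.concat_eq_append, List.prod_append, List.prod_singleton]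
    simp only [Fin.snoc_castSucc, Fin.snoc_last]

theorem qminor_eq_foldl_mulCol {n d k : ℕ} {X : Matrix (Fin n) (Fin d) R}
    (hX : CommuteAntidiagonally X) (hk : k ≤ d) (S : Finset (Fin n)) (hS : #S = k) :
    qminor q X hk S hS =
      (List.ofFn (Fin.castLE hk)).foldl (mulCol q X) (Pi.single ∅ 1) S := by
  have hsub : CommuteAntidiagonally
      (Matrix.of fun s t => X (S.orderIsoOfFin hS s) (Fin.castLE hk t)) :=
    fun _ _ _ _ hij hkl => hX ((S.orderIsoOfFin hS).strictMono hij) hkl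
  rw [foldl_mulCol_apply, sum_enumerations_eq_sum_perm hS, qminor, qdet_eq_sum_cols hsub]
  simp only [tupleInv_comp_of_strictMono (S.orderEmbOfFin hS).strictMono]
  rfl

theorem sum_erase_eq_sum_lt {M : Type*} [AddCommMonoid M] (S : Finset ι) (F : ι → ι → M) :
    ∑ i ∈ S, ∑ j ∈ S.erase i, F i j = ∑ a ∈ S, ∑ b ∈ S with a < b, (F b a + F a b) := by
  have hsplit : ∀ i ∈ S, ∑ j ∈ S.erase i, F i j =
      ∑ j ∈ S with j < i, F i j + ∑ j ∈ S with i < j, F i j := fun i _ => by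
    rw [← sum_union (disjoint_filter.2 fun _ _ h => h.not_gt), ← filter_or]
    refine sum_congr ?_ fun _ _ => rfl
    ext j
    simp [lt_or_lt_iff_ne, and_comm]
  have hswap : ∑ i ∈ S, ∑ j ∈ S with j < i, F i j = ∑ a ∈ S, ∑ b ∈ S with a < b, F b a :=
    sum_comm' (by simp only [mem_filter]; tauto)
  rw [sum_congr rfl hsplit, sum_add_distrib, hswap]
  simp only [sum_add_distrib]

theorem mulCol_mulCol_apply (hq : ∀ x : R, Commute (q : R) x) (X : Matrix ι κ R)
    (f : Finset ι → R) (u v : κ) (S : Finset ι) :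
    mulCol q X (mulCol q X f u) v S =
      ∑ a ∈ S, ∑ b ∈ S with a < b, (-q)⁻¹ ^ (#{j ∈ S | b < j} + #{j ∈ S.erase b | a < j}) •
        (f ((S.erase a).erase b) * (X a u * X b v + (-q)⁻¹ • (X b u * X a v))) := by
  simp only [mulCol, sum_mul, smul_sum, smul_mul_assoc, smul_smul, ← pow_add]
  rw [sum_erase_eq_sum_lt]
  refine sum_congr rfl fun a _ => sum_congr rfl fun b hb => ?_
  have hab := (mem_filter.1 hb).2
  have hcard_a : #{j ∈ S | a < j} = #{j ∈ S.erase b | a < j} + 1 := by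
    rw [filter_erase, card_erase_add_one hb]
  have hcard_b : #{j ∈ S.erase a | b < j} = #{j ∈ S | b < j} := by
    rw [filter_erase, erase_eq_of_notMem (by simp [hab.le])]
  have hinv (x : R) : Commute (((-q)⁻¹ : Rˣ) : R) x := by
    simpa only [pow_one] using commute_val_inv_neg_pow hq 1 x
  rw [hcard_a, hcard_b, erase_right_comm, mul_add, mul_units_smul_of_commute (hinv _), smul_add,
    smul_smul, ← pow_succ, mul_assoc, mul_assoc, add_comm (_ + 1), ← add_assoc]

variable [LinearOrder κ]

/-- `q`-Manin matrices, whose column quantum determinants behave like those of `q`-generic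
matrices: these are the relations under which the elements `y_c` of the quantum exterior algebra
(see `mulCol`) satisfy `y_c² = 0` and `y_k y_l = -q y_l y_k` for `k < l`. The second one is the
cross relation `x_{ik} x_{jl} - x_{jl} x_{ik} = q⁻¹ x_{jk} x_{il} - q x_{il} x_{jk}`, arranged so
that its two sides are the coefficients of `ξ_i ξ_j` in `y_k y_l` and `-q y_l y_k`. -/
def IsQManin_s8 (q : Rˣ) (X : Matrix ι κ R) : Prop :=
  (∀ ⦃i j : ι⦄ (k : κ), i < j → X j k * X i k = q • (X i k * X j k)) ∧
  ∀ ⦃i j : ι⦄ ⦃k l : κ⦄, i < j → k < l →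
    X i k * X j l + (-q)⁻¹ • (X j k * X i l) = (-q) • (X i l * X j k + (-q)⁻¹ • (X j l * X i k))

variable {X : Matrix ι κ R}

theorem IsQManin_s8.mulCol_mulCol_self (hX : IsQManin_s8 q X)
    (hq : ∀ x : R, Commute (q : R) x) (f : Finset ι → R) (c : κ) :
    mulCol q X (mulCol q X f c) c = 0 := by
  ext S
  rw [mulCol_mulCol_apply hq]
  refine sum_eq_zero fun a _ => sum_eq_zero fun b hb => ?_
  have hzero : X a c * X b c + (-q)⁻¹ • (X b c * X a c) = 0 := by
    rw [hX.1 c (mem_filter.1 hb).2, smul_smul, inv_neg, neg_mul, inv_mul_cancel, Units.neg_smul,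
      one_smul, add_neg_cancel]
  rw [hzero, mul_zero, smul_zero]

theorem IsQManin_s8.mulCol_mulCol_of_lt (hX : IsQManin_s8 q X)
    (hq : ∀ x : R, Commute (q : R) x) (f : Finset ι → R) {u v : κ} (huv : u < v) :
    mulCol q X (mulCol q X f u) v = (-q) • mulCol q X (mulCol q X f v) u := by
  ext S
  rw [Pi.smul_apply, mulCol_mulCol_apply hq, mulCol_mulCol_apply hq, smul_sum]
  refine sum_congr rfl fun a _ => ?_
  rw [smul_sum]
  refine sum_congr rfl fun b hb => ?_
  have hneg : Commute ((-q : Rˣ) : R) (f ((S.erase a).erase b)) := (hq _).neg_left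
  rw [hX.2 (mem_filter.1 hb).2 huv, mul_units_smul_of_commute hneg, smul_smul, smul_smul,
    ((Commute.refl (-q)).inv_left.pow_left _).eq]

theorem IsQManin_s8.mulCol_mulCol_eq_zero (hX : IsQManin_s8 q X)
    (hq : ∀ x : R, Commute (q : R) x) {f : Finset ι → R} {v : κ}
    (hf : mulCol q X f v = 0) (u : κ) : mulCol q X (mulCol q X f u) v = 0 := by
  rcases lt_trichotomy u v with huv | rfl | hvu
  · rw [hX.mulCol_mulCol_of_lt hq f huv, hf, zero_mulCol, smul_zero]
  · exact hX.mulCol_mulCol_self hq f u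
  · refine (smul_eq_zero_iff_eq (-q)).1 ?_
    rw [← hX.mulCol_mulCol_of_lt hq f hvu, hf, zero_mulCol]

theorem IsQManin_s8.mulCol_foldl_eq_zero (hX : IsQManin_s8 q X)
    (hq : ∀ x : R, Commute (q : R) x) (f : Finset ι → R) {cs : List κ} {v : κ}
    (hv : v ∈ cs) : mulCol q X (cs.foldl (mulCol q X) f) v = 0 := by
  induction cs using List.reverseRecOn with
  | nil => simp at hv
  | append_singleton cs u ih =>
    rw [List.foldl_append, List.foldl_cons, List.foldl_nil]
    rcases List.mem_append.1 hv with hv | hv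
    · exact hX.mulCol_mulCol_eq_zero hq (ih hv) u
    · rw [List.mem_singleton.1 hv]
      exact hX.mulCol_mulCol_self hq _ u

end QuantumExteriorAlgebra

section Plucker

variable {R : Type*} [Ring R] {q : Rˣ} {n d k : ℕ} {X : Matrix (Fin n) (Fin d) R}

theorem qGeneric.commuteAntidiagonally (hX : qGeneric q X) : CommuteAntidiagonally X :=
  fun _ _ _ _ hij hkl => hX.2.2.1 _ _ _ _ hij hkl

theorem qGeneric.isQManin_s8 (hX : qGeneric q X) : IsQManin_s8 q X := by
  refine ⟨fun i j k hij => hX.2.1 i j k hij, fun i j k l hij hkl => ?_⟩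
  rw [hX.2.2.2 i j k l hij hkl, hX.2.2.1 i j k l hij hkl, smul_add, smul_smul, mul_inv_cancel,
    one_smul]
  simp only [Units.smul_def, smul_eq_mul, inv_neg, Units.val_neg, neg_mul, sub_mul]
  abel

theorem sum_qminor_erase_mul_eq_zero (hq : ∀ x : R, Commute (q : R) x)
    (hX : IsQManin_s8 q X) (hcomm : CommuteAntidiagonally X) (hk : k ≤ d) (I : Finset (Fin n))
    (hI : #I = k + 1) (c : Fin k) :
    ∑ s : Fin (k + 1), (((-q) ^ (-((k : ℤ) - (s.val : ℤ))) : Rˣ) : R) *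
      qminor q X hk (I.erase (I.orderIsoOfFin hI s))
        (by rw [card_erase_of_mem (I.orderIsoOfFin hI s).2, hI]; rfl) *
      X (I.orderIsoOfFin hI s) (Fin.castLE hk c) = 0 := by
  have hmem : Fin.castLE hk c ∈ List.ofFn (Fin.castLE hk) := List.mem_ofFn.2 ⟨c, rfl⟩
  have hzero := congrFun (hX.mulCol_foldl_eq_zero hq (Pi.single ∅ 1) hmem) I
  rw [mulCol, Pi.zero_apply, ← sum_coe_sort I,
    ← (I.orderIsoOfFin hI).toEquiv.sum_comp] at hzero
  rw [← hzero]
  refine sum_congr rfl fun s _ => ?_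
  have hexp : (k : ℤ) - (s.val : ℤ) = ((k - s : ℕ) : ℤ) := by have := s.isLt; omega
  rw [qminor_eq_foldl_mulCol hcomm, hexp, mul_assoc, coe_zpow_neg_mul]
  simp only [RelIso.coe_fn_toEquiv, card_filter_orderIsoOfFin_lt, Nat.add_sub_cancel]

theorem qminorT_cons (hk : k + 1 ≤ d) (i : Fin n) (J : Fin k → Fin n) :
    qminorT q X hk (Fin.cons i J) = qdet q (Matrix.of (Matrix.vecCons
      (fun t => X i (Fin.castLE hk t)) fun s t => X (J s) (Fin.castLE hk t))) := by
  refine congrArg (qdet q) (Matrix.ext fun s t => ?_)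
  cases s using Fin.cases <;> simp

end Plucker

theorem stmt8_general {R : Type*} [Ring R] (q : Rˣ) (hq : ∀ x : R, Commute (q : R) x)
    {n d k : ℕ} (hk : k + 1 ≤ d) (X : Matrix (Fin n) (Fin d) R) (hX : IsQManin_s8 q X)
    (hcomm : CommuteAntidiagonally X) (I : Finset (Fin n)) (hI : #I = k + 1 + 1)
    (Y : Fin k → Fin (k + 1) → R) :
    ∑ s : Fin (k + 1 + 1), (((-q) ^ (-(((k + 1 : ℕ) : ℤ) - (s.val : ℤ))) : Rˣ) : R) *
      qminor q X hk (I.erase (I.orderIsoOfFin hI s))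
        (by rw [card_erase_of_mem (I.orderIsoOfFin hI s).2, hI]; rfl) *
      qdet q (Matrix.of (Matrix.vecCons
        (fun t => X (I.orderIsoOfFin hI s) (Fin.castLE hk t)) Y)) = 0 := by
  simp only [qdet_vecCons_eq_sum hq (fun t => X _ (Fin.castLE hk t)), mul_sum, ← mul_assoc]
  rw [sum_comm]
  refine sum_eq_zero fun c _ => ?_
  rw [← sum_mul, sum_qminor_erase_mul_eq_zero hq hX hcomm hk I hI c, zero_mul]

/-- The quantized Young symmetry (quantum Plücker) relation for `r = 1`:
for `I = {i_1 < ⋯ < i_{d+1}}` and a `(d-1)`-tuple `J`,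
`∑_{λ=1}^{d+1} (-q)^{-(d+1-λ)} [I∖{i_λ}]·[i_λ|J] = 0`. -/
theorem stmt8 {R : Type*} [Ring R] (q : Rˣ) (hq : ∀ x : R, (q : R) * x = x * (q : R))
    {n d : ℕ} (hd : 1 ≤ d) (X : Matrix (Fin n) (Fin d) R) (hX : qGeneric q X)
    (I : Finset (Fin n)) (hI : I.card = d + 1) (J : Fin (d - 1) → Fin n) :
    ∑ s : Fin (d + 1),
      (((-q) ^ (-((d : ℤ) - (s.val : ℤ))) : Rˣ) : R) *
        qminor q X (le_refl d) (I.erase (I.orderIsoOfFin hI s))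
          (by rw [Finset.card_erase_of_mem (I.orderIsoOfFin hI s).2, hI]; omega) *
        qminorT q X (le_refl d)
          (fun x : Fin d => Fin.append (fun _ : Fin 1 => ((I.orderIsoOfFin hI s : Fin n))) J
            (Fin.cast (by omega : d = 1 + (d - 1)) x))
      = 0 := by
  obtain ⟨k, rfl⟩ := Nat.exists_eq_add_of_le' hd
  simpa [Fin.append_left_eq_cons, qminorT_cons] using stmt8_general q hq le_rfl X hX.isQManin_s8
    hX.commuteAntidiagonally I hI fun s => X (J s)
end
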